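/- Let γ be an affinely parametrized geodesic of a warped product M̂ ×_f Y with tangent N = (N̂, N̄), and E(u) a parallel-transported vector field along γ with E(0) = e. Then g(N, E) is constant, equal to a := g(N(0), e), and the base component of E satisfies the transport equation N̂^a ∇̂_a E^b = ( a − ĝ(N̂, Ê) ) f⁻¹ (grad f)^b, which involves only quantities of the base (M̂, ĝ). In particular, if e is orthogonal to N(0) (a = 0), this reduces to N̂^b ∇̂_b Ê^a = −( ĝ_{bc} N̂^b Ê^c ) ∇̂^a (ln f), and if moreover e^a = 0 then Ê^a(u) = 0 for all u. -/

import Mathlib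

open Filter MeasureTheory
open scoped BigOperators Topology

noncomputable section

namespace Paper

variable {ι : Type*} [Fintype ι] [DecidableEq ι]
variable {κ : Type*} [Fintype κ] [DecidableEq κ]

/-- Coordinate partial derivative of a scalar field in the direction `ρ`. -/
def pd (h : (ι → ℝ) → ℝ) (ρ : ι) (x : ι → ℝ) : ℝ :=
  fderiv ℝ h x (Pi.single ρ 1)

/-- The inverse metric. -/
def ginv (g : (ι → ℝ) → Matrix ι ι ℝ) (x : ι → ℝ) : Matrix ι ι ℝ :=
  (g x)⁻¹

/-- Christoffel symbols `Γ^μ_{ρσ} = ½ g^{μν}(∂_ρ g_{νσ} + ∂_σ g_{νρ} − ∂_ν g_{ρσ})`. -/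
def Γc (g : (ι → ℝ) → Matrix ι ι ℝ) (μ ρ σ : ι) (x : ι → ℝ) : ℝ :=
  (1 / 2) * ∑ ν, ginv g x μ ν *
    (pd (fun y => g y ν σ) ρ x + pd (fun y => g y ν ρ) σ x - pd (fun y => g y ρ σ) ν x)

/-- Riemann curvature tensor `R^α_{βμν}`. -/
def Riem (g : (ι → ℝ) → Matrix ι ι ℝ) (α β μ ν : ι) (x : ι → ℝ) : ℝ :=
  pd (Γc g α ν β) μ x - pd (Γc g α μ β) ν x
    + ∑ lam, Γc g α μ lam x * Γc g lam ν β x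
    - ∑ lam, Γc g α ν lam x * Γc g lam μ β x

/-- Riemann tensor with the first index lowered, `R_{μνρσ} = g_{μλ} R^λ_{νρσ}`. -/
def RiemLow (g : (ι → ℝ) → Matrix ι ι ℝ) (μ ν ρ σ : ι) (x : ι → ℝ) : ℝ :=
  ∑ lam, g x μ lam * Riem g lam ν ρ σ x

/-- Ricci tensor `R_{μν} = R^ρ_{μρν}`. -/
def Ric (g : (ι → ℝ) → Matrix ι ι ℝ) (μ ν : ι) (x : ι → ℝ) : ℝ :=
  ∑ ρ, Riem g ρ μ ρ ν x

/-- Scalar product of two vectors with respect to the metric at `x`. -/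
def sq (g : (ι → ℝ) → Matrix ι ι ℝ) (x : ι → ℝ) (v w : ι → ℝ) : ℝ :=
  ∑ μ, ∑ ν, g x μ ν * v μ * w ν

/-- Velocity (tangent vector field) of a parametrized curve. -/
def vel (γ : ℝ → ι → ℝ) (u : ℝ) : ι → ℝ :=
  fun μ => deriv (fun w => γ w μ) u

/-- Covariant derivative, along the curve `γ`, of a vector field `V` given along `γ`. -/
def covD (g : (ι → ℝ) → Matrix ι ι ℝ) (γ V : ℝ → ι → ℝ) (u : ℝ) (μ : ι) : ℝ :=
  deriv (fun w => V w μ) u + ∑ ρ, ∑ σ, Γc g μ ρ σ (γ u) * vel γ u ρ * V u σ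

/-- The (affinely parametrized) geodesic equation at parameter value `u`. -/
def GeodesicAt (g : (ι → ℝ) → Matrix ι ι ℝ) (γ : ℝ → ι → ℝ) (u : ℝ) : Prop :=
  ∀ μ, covD g γ (vel γ) u μ = 0

/-- `γ` is an affinely parametrized geodesic of `g`. -/
def IsGeodesic (g : (ι → ℝ) → Matrix ι ι ℝ) (γ : ℝ → ι → ℝ) : Prop :=
  ∀ u, GeodesicAt g γ u

/-- `E` is parallelly transported along `γ`. -/
def IsParallel (g : (ι → ℝ) → Matrix ι ι ℝ) (γ E : ℝ → ι → ℝ) : Prop :=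
  ∀ u μ, covD g γ E u μ = 0

def SmoothCurve (γ : ℝ → ι → ℝ) : Prop :=
  ∀ μ, ContDiff ℝ (⊤ : ℕ∞) fun u => γ u μ

/-- A smooth symmetric everywhere-nondegenerate metric. -/
def SmoothMetric (g : (ι → ℝ) → Matrix ι ι ℝ) : Prop :=
  (∀ μ ν, ContDiff ℝ (⊤ : ℕ∞) fun x => g x μ ν) ∧
    (∀ x μ ν, g x μ ν = g x ν μ) ∧ ∀ x, IsUnit (g x).det

/-- Lorentzian signature `(−,+,…,+)`: there is a timelike vector whose `g`-orthogonal
complement is positive definite. -/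
def Lorentzian (g : (ι → ℝ) → Matrix ι ι ℝ) : Prop :=
  SmoothMetric g ∧
    ∀ x, ∃ t : ι → ℝ, sq g x t t < 0 ∧ ∀ v : ι → ℝ, sq g x t v = 0 → v ≠ 0 → 0 < sq g x v v

/-- Riemannian (positive definite) metric. -/
def Riemannian (g : (ι → ℝ) → Matrix ι ι ℝ) : Prop :=
  SmoothMetric g ∧ ∀ x, ∀ v : ι → ℝ, v ≠ 0 → 0 < sq g x v v

def NullVec (g : (ι → ℝ) → Matrix ι ι ℝ) (x v : ι → ℝ) : Prop :=
  sq g x v v = 0 ∧ v ≠ 0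

/-- A time orientation: an everywhere timelike vector field. -/
def TimeOrientation (g : (ι → ℝ) → Matrix ι ι ℝ) (T : (ι → ℝ) → ι → ℝ) : Prop :=
  ∀ x, sq g x (T x) (T x) < 0

/-- `v` is a future-pointing causal vector at `x` (wrt the time orientation `T`). -/
def FutureCausal (g : (ι → ℝ) → Matrix ι ι ℝ) (T : (ι → ℝ) → ι → ℝ) (x v : ι → ℝ) : Prop :=
  sq g x v v ≤ 0 ∧ v ≠ 0 ∧ sq g x (T x) v < 0

/-- `S` is met exactly once by every inextendible future-directed causal curve
(inextendibility being encoded by parametrization by Euclidean arclength on all of `ℝ`). -/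
def IsCauchySurface (g : (ι → ℝ) → Matrix ι ι ℝ) (T : (ι → ℝ) → ι → ℝ)
    (S : Set (ι → ℝ)) : Prop :=
  ∀ γ : ℝ → ι → ℝ, (∀ μ, Differentiable ℝ fun u => γ u μ) →
    (∀ u, FutureCausal g T (γ u) (vel γ u)) →
    (∀ u, ∑ μ, (vel γ u μ) ^ 2 = 1) → ∃! u, γ u ∈ S

/-- `g`-gradient vector of a scalar function. -/
def gradVec (g : (ι → ℝ) → Matrix ι ι ℝ) (τ : (ι → ℝ) → ℝ) (x : ι → ℝ) : ι → ℝ :=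
  fun μ => ∑ ν, ginv g x μ ν * pd τ ν x

/-- Existence of a non-compact (spacelike) Cauchy hypersurface, encoded as a regular
level set of a smooth function with timelike gradient. -/
def HasNoncompactCauchySurface (g : (ι → ℝ) → Matrix ι ι ℝ)
    (T : (ι → ℝ) → ι → ℝ) : Prop :=
  ∃ τ : (ι → ℝ) → ℝ, ContDiff ℝ (⊤ : ℕ∞) τ ∧ ¬ IsCompact {x | τ x = 0} ∧
    (∀ x, τ x = 0 → sq g x (gradVec g τ x) (gradVec g τ x) < 0) ∧
    IsCauchySurface g T {x | τ x = 0}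

/-- Null geodesic completeness: every null initial datum extends to a geodesic
defined for all values of the affine parameter. -/
def NullComplete (g : (ι → ℝ) → Matrix ι ι ℝ) : Prop :=
  ∀ x v : ι → ℝ, NullVec g x v →
    ∃ γ : ℝ → ι → ℝ, SmoothCurve γ ∧ γ 0 = x ∧ vel γ 0 = v ∧ IsGeodesic g γ

/-- Future null geodesic completeness. -/
def FutureNullComplete (g : (ι → ℝ) → Matrix ι ι ℝ) (T : (ι → ℝ) → ι → ℝ) : Prop :=
  ∀ x v : ι → ℝ, NullVec g x v → FutureCausal g T x v →
    ∃ γ : ℝ → ι → ℝ, SmoothCurve γ ∧ γ 0 = x ∧ vel γ 0 = v ∧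
      ∀ u, 0 ≤ u → GeodesicAt g γ u

/-! ### Submanifolds given implicitly as regular zero sets -/

/-- Differential (lowered normal covectors) of the defining map `F`. -/
def dFm (F : (ι → ℝ) → κ → ℝ) (α : κ) (μ : ι) (x : ι → ℝ) : ℝ :=
  pd (fun y => F y α) μ x

/-- The normal vectors `ν_α = grad F^α` spanning the normal space. -/
def normalBasis (g : (ι → ℝ) → Matrix ι ι ℝ) (F : (ι → ℝ) → κ → ℝ) (α : κ)
    (x : ι → ℝ) : ι → ℝ :=
  fun μ => ∑ ν, ginv g x μ ν * dFm F α ν x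

/-- Gram matrix `W_{αβ} = g(ν_α, ν_β)` of the normals. -/
def gram (g : (ι → ℝ) → Matrix ι ι ℝ) (F : (ι → ℝ) → κ → ℝ) (x : ι → ℝ) :
    Matrix κ κ ℝ :=
  Matrix.of fun α β => ∑ μ, dFm F α μ x * normalBasis g F β x μ

/-- The (contravariant) orthogonal projector onto the tangent space of `{F = 0}`. -/
def tanProj (g : (ι → ℝ) → Matrix ι ι ℝ) (F : (ι → ℝ) → κ → ℝ) (x : ι → ℝ)
    (μ ν : ι) : ℝ :=
  ginv g x μ ν -
    ∑ α, ∑ β, (gram g F x)⁻¹ α β * normalBasis g F α x μ * normalBasis g F β x ν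

/-- Covariant Hessian `∇_μ ∇_ν F^α`. -/
def hessF (g : (ι → ℝ) → Matrix ι ι ℝ) (F : (ι → ℝ) → κ → ℝ) (α : κ) (μ ν : ι)
    (x : ι → ℝ) : ℝ :=
  pd (fun y => dFm F α ν y) μ x - ∑ lam, Γc g lam μ ν x * dFm F α lam x

/-- The expansion `θ(n)` of the submanifold `{F = 0}` along the normal
`n = ∑ c_α ν_α`, namely `θ(n) = ∑_α c_α h^{μν} ∇_μ∇_ν F^α`. -/
def expansionCoeff (g : (ι → ℝ) → Matrix ι ι ℝ) (F : (ι → ℝ) → κ → ℝ) (x : ι → ℝ)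
    (c : κ → ℝ) : ℝ :=
  ∑ α, c α * ∑ μ, ∑ ν, tanProj g F x μ ν * hessF g F α μ ν x

/-- `v` is tangent to the level set `{F = 0}` at `x`. -/
def TangentTo (F : (ι → ℝ) → κ → ℝ) (x v : ι → ℝ) : Prop :=
  ∀ α, ∑ μ, dFm F α μ x * v μ = 0

/-- The normal vector with components `c` in the basis of normals. -/
def NormalComb (g : (ι → ℝ) → Matrix ι ι ℝ) (F : (ι → ℝ) → κ → ℝ) (x : ι → ℝ)
    (c : κ → ℝ) : ι → ℝ :=
  fun μ => ∑ α, c α * normalBasis g F α x μ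

/-- A closed (compact without boundary) spacelike submanifold, given as the regular
zero set of the smooth map `F`, of co-dimension `card κ`. -/
def ClosedSpacelikeSubmanifold (g : (ι → ℝ) → Matrix ι ι ℝ)
    (F : (ι → ℝ) → κ → ℝ) : Prop :=
  (∀ α, ContDiff ℝ (⊤ : ℕ∞) fun x => F x α) ∧
    IsCompact {x | ∀ α, F x α = 0} ∧ {x | ∀ α, F x α = 0}.Nonempty ∧
    (∀ x, (∀ α, F x α = 0) → IsUnit (gram g F x).det) ∧
    (∀ x, (∀ α, F x α = 0) → ∀ v, TangentTo F x v → v ≠ 0 → 0 < sq g x v v)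

/-- Future-trapped: every future-pointing causal normal has negative expansion. -/
def FutureTrapped (g : (ι → ℝ) → Matrix ι ι ℝ) (T : (ι → ℝ) → ι → ℝ)
    (F : (ι → ℝ) → κ → ℝ) : Prop :=
  ∀ x, (∀ α, F x α = 0) → ∀ c : κ → ℝ,
    FutureCausal g T x (NormalComb g F x c) → expansionCoeff g F x c < 0

/-! ### Warped products -/

def basePt {d₁ d₂ : ℕ} (x : (Fin d₁ ⊕ Fin d₂) → ℝ) : Fin d₁ → ℝ :=
  fun a => x (Sum.inl a)

def fibPt {d₁ d₂ : ℕ} (x : (Fin d₁ ⊕ Fin d₂) → ℝ) : Fin d₂ → ℝ :=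
  fun i => x (Sum.inr i)

/-- The warped product metric `g = ĝ + f² ḡ` in adapted coordinates. -/
def warped {d₁ d₂ : ℕ} (gB : (Fin d₁ → ℝ) → Matrix (Fin d₁) (Fin d₁) ℝ)
    (gF : (Fin d₂ → ℝ) → Matrix (Fin d₂) (Fin d₂) ℝ) (f : (Fin d₁ → ℝ) → ℝ) :
    ((Fin d₁ ⊕ Fin d₂) → ℝ) → Matrix (Fin d₁ ⊕ Fin d₂) (Fin d₁ ⊕ Fin d₂) ℝ :=
  fun x => Matrix.of fun μ ν =>
    match μ, ν with
    | Sum.inl a, Sum.inl b => gB (basePt x) a b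
    | Sum.inl _, Sum.inr _ => 0
    | Sum.inr _, Sum.inl _ => 0
    | Sum.inr i, Sum.inr j => (f (basePt x)) ^ 2 * gF (fibPt x) i j

/-- Projection of a spacetime curve to the base. -/
def baseCurve {d₁ d₂ : ℕ} (γ : ℝ → (Fin d₁ ⊕ Fin d₂) → ℝ) : ℝ → Fin d₁ → ℝ :=
  fun u => basePt (γ u)

/-- Projection of a spacetime curve to the fiber. -/
def fibCurve {d₁ d₂ : ℕ} (γ : ℝ → (Fin d₁ ⊕ Fin d₂) → ℝ) : ℝ → Fin d₂ → ℝ :=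
  fun u => fibPt (γ u)

/-- Lift of a base vector to the warped product (vanishing fiber components). -/
def liftVec {d₁ d₂ : ℕ} (v : Fin d₁ → ℝ) : (Fin d₁ ⊕ Fin d₂) → ℝ :=
  fun μ => match μ with
  | Sum.inl a => v a
  | Sum.inr _ => 0

/-- Lift of a base vector field (e.g. a time orientation) to the warped product. -/
def liftT {d₁ d₂ : ℕ} (T : (Fin d₁ → ℝ) → Fin d₁ → ℝ) :
    ((Fin d₁ ⊕ Fin d₂) → ℝ) → (Fin d₁ ⊕ Fin d₂) → ℝ :=
  fun x => liftVec (T (basePt x))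

/-- Defining map of the lift `ζ_p ⊆ Y_p` of the submanifold `{Fb = 0} ⊆ Y`. -/
def liftF {d₁ d₂ m' : ℕ} (p : Fin d₁ → ℝ) (Fb : (Fin d₂ → ℝ) → Fin m' → ℝ) :
    ((Fin d₁ ⊕ Fin d₂) → ℝ) → (Fin d₁ ⊕ Fin m') → ℝ :=
  fun x α => match α with
  | Sum.inl a => x (Sum.inl a) - p a
  | Sum.inr β => Fb (fibPt x) β

/-- Covariant Hessian `∇_μ∇_ν f` of a scalar function. -/
def hess (g : (ι → ℝ) → Matrix ι ι ℝ) (f : (ι → ℝ) → ℝ) (μ ν : ι) (x : ι → ℝ) : ℝ :=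
  pd (fun y => pd f ν y) μ x - ∑ lam, Γc g lam μ ν x * pd f lam x

/-- `∇^μ f ∇_μ f`. -/
def gradSq (g : (ι → ℝ) → Matrix ι ι ℝ) (f : (ι → ℝ) → ℝ) (x : ι → ℝ) : ℝ :=
  ∑ μ, ∑ ν, ginv g x μ ν * pd f μ x * pd f ν x

/-! ### Parametrized submanifolds and their expansions -/

/-- Partial derivative of a parametrization `φ`. -/
def dpar {k : ℕ} (φ : (Fin k → ℝ) → ι → ℝ) (A : Fin k) (μ : ι)
    (y : Fin k → ℝ) : ℝ :=
  fderiv ℝ (fun z => φ z μ) y (Pi.single A 1)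

/-- First fundamental form of a parametrized submanifold. -/
def firstFF {k : ℕ} (g : (ι → ℝ) → Matrix ι ι ℝ) (φ : (Fin k → ℝ) → ι → ℝ)
    (y : Fin k → ℝ) : Matrix (Fin k) (Fin k) ℝ :=
  Matrix.of fun A B => ∑ μ, ∑ ν, g (φ y) μ ν * dpar φ A μ y * dpar φ B ν y

/-- The expansion `θ(n) = n_μ H^μ` of a parametrized submanifold along a normal `n`,
via `θ(n) = −γ^{AB} n_μ (∂_A∂_B φ^μ + Γ^μ_{ρσ} ∂_A φ^ρ ∂_B φ^σ)`. -/
def expansionPar {k : ℕ} (g : (ι → ℝ) → Matrix ι ι ℝ) (φ : (Fin k → ℝ) → ι → ℝ)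
    (y : Fin k → ℝ) (n : ι → ℝ) : ℝ :=
  - ∑ A, ∑ B, (firstFF g φ y)⁻¹ A B *
      ∑ μ, (∑ ν, g (φ y) μ ν * n ν) *
        (fderiv ℝ (fun z => dpar φ B μ z) y (Pi.single A 1)
          + ∑ ρ, ∑ σ, Γc g μ ρ σ (φ y) * dpar φ A ρ y * dpar φ B σ y)


/-! ### Auxiliary lemmas -/

lemma aux_fderiv_eq (h : (ι → ℝ) → ℝ) (x v : ι → ℝ) :
    fderiv ℝ h x v = ∑ ρ, pd h ρ x * v ρ := by
  have := LinearMap.pi_apply_eq_sum_univ (fderiv ℝ h x).toLinearMap v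
  simp only [ContinuousLinearMap.coe_coe, smul_eq_mul] at this
  rw [this]
  refine Finset.sum_congr rfl fun ρ _ => ?_
  rw [mul_comm]
  unfold pd
  congr 2
  ext j
  simp [Pi.single_apply, eq_comm]

lemma aux_lower (g : (ι → ℝ) → Matrix ι ι ℝ) (hg : SmoothMetric g) (x : ι → ℝ) (l ρ σ : ι) :
    ∑ μ, g x l μ * Γc g μ ρ σ x =
      (1 / 2) * (pd (fun y => g y l σ) ρ x + pd (fun y => g y l ρ) σ x
        - pd (fun y => g y ρ σ) l x) := by
  set K : ι → ℝ := fun ν => pd (fun y => g y ν σ) ρ x + pd (fun y => g y ν ρ) σ x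
        - pd (fun y => g y ρ σ) ν x with hK
  have h1 : ∀ μ, Γc g μ ρ σ x = (1 / 2) * ((g x)⁻¹.mulVec K) μ := by
    intro μ; rfl
  have h2 : (g x).mulVec ((g x)⁻¹.mulVec K) l = K l := by
    rw [Matrix.mulVec_mulVec, Matrix.mul_nonsing_inv _ (hg.2.2 x), Matrix.one_mulVec]
  have h3 : (g x).mulVec ((g x)⁻¹.mulVec K) l = ∑ μ, g x l μ * ((g x)⁻¹.mulVec K) μ := rfl
  change _ = (1 / 2) * K l
  rw [← h2, h3, Finset.mul_sum]
  refine Finset.sum_congr rfl fun μ _ => ?_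
  rw [h1]; ring

lemma aux_hasDerivAt_comp (h : (ι → ℝ) → ℝ) (hh : ContDiff ℝ (⊤ : ℕ∞) h)
    (γ : ℝ → ι → ℝ) (hγ : SmoothCurve γ) (u : ℝ) :
    HasDerivAt (fun w => h (γ w)) (∑ ρ, pd h ρ (γ u) * vel γ u ρ) u := by
  rw [← aux_fderiv_eq]
  have h1 : HasDerivAt γ (vel γ u) u :=
    hasDerivAt_pi.2 fun μ => ((hγ μ).differentiable (by simp) u).hasDerivAt
  exact ((hh.differentiable (by simp) (γ u)).hasFDerivAt).comp_hasDerivAt u h1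

lemma aux_sum_three (G : ι → ι → ι → ℝ) (g : Matrix ι ι ℝ) (hs : ∀ i j, g i j = g j i)
    (C : ι → ι → ι → ℝ) (hC : ∀ l ρ σ, ∑ μ, g l μ * C μ ρ σ = G l ρ σ) (n V W : ι → ℝ) :
    ∑ μ, ∑ ν, g μ ν * (∑ ρ, ∑ σ, C μ ρ σ * n ρ * V σ) * W ν
      = ∑ μ, ∑ ν, ∑ ρ, G ν ρ μ * n ρ * V μ * W ν := by
  have h1 : ∀ ν, ∑ μ, g μ ν * (∑ ρ, ∑ σ, C μ ρ σ * n ρ * V σ)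
      = ∑ ρ, ∑ σ, G ν ρ σ * n ρ * V σ := by
    intro ν
    simp_rw [← hC, Finset.mul_sum, Finset.sum_mul]
    rw [Finset.sum_comm]
    refine Finset.sum_congr rfl fun ρ _ => ?_
    rw [Finset.sum_comm]
    refine Finset.sum_congr rfl fun σ _ => Finset.sum_congr rfl fun μ _ => ?_
    rw [hs μ ν]; ring
  rw [Finset.sum_comm]
  simp_rw [← Finset.sum_mul]
  simp_rw [h1]
  rw [Finset.sum_comm (s := Finset.univ) (t := Finset.univ)
    (f := fun μ ν => (∑ ρ, G ν ρ μ * n ρ) * V μ * W ν)]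
  refine Finset.sum_congr rfl fun ν _ => ?_
  rw [← Finset.sum_mul, Finset.sum_comm]
  simp_rw [← Finset.sum_mul]

lemma aux_sq_deriv (g : (ι → ℝ) → Matrix ι ι ℝ) (hg : SmoothMetric g)
    (γ V W : ℝ → ι → ℝ) (hγ : SmoothCurve γ) (hV : SmoothCurve V) (hW : SmoothCurve W)
    (pV : IsParallel g γ V) (pW : IsParallel g γ W) (u : ℝ) :
    HasDerivAt (fun w => sq g (γ w) (V w) (W w)) 0 u := by
  have hVd : ∀ μ, HasDerivAt (fun w => V w μ)
      (-∑ ρ, ∑ σ, Γc g μ ρ σ (γ u) * vel γ u ρ * V u σ) u := by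
    intro μ
    have := ((hV μ).differentiable (by simp) u).hasDerivAt
    have h2 := pV u μ
    unfold covD at h2
    rwa [eq_neg_of_add_eq_zero_left h2] at this
  have hWd : ∀ μ, HasDerivAt (fun w => W w μ)
      (-∑ ρ, ∑ σ, Γc g μ ρ σ (γ u) * vel γ u ρ * W u σ) u := by
    intro μ
    have := ((hW μ).differentiable (by simp) u).hasDerivAt
    have h2 := pW u μ
    unfold covD at h2
    rwa [eq_neg_of_add_eq_zero_left h2] at this
  have hgd : ∀ μ ν, HasDerivAt (fun w => g (γ w) μ ν)
      (∑ ρ, pd (fun y => g y μ ν) ρ (γ u) * vel γ u ρ) u :=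
    fun μ ν => aux_hasDerivAt_comp (fun y => g y μ ν) (hg.1 μ ν) γ hγ u
  have key := HasDerivAt.fun_sum (u := (Finset.univ : Finset ι)) fun μ _ =>
    HasDerivAt.fun_sum (u := (Finset.univ : Finset ι)) fun ν _ =>
      ((hgd μ ν).fun_mul (hVd μ)).fun_mul (hWd ν)
  refine HasDerivAt.congr_deriv key ?_
  set G : ι → ι → ι → ℝ := fun l ρ σ =>
      (1 / 2) * (pd (fun y => g y l σ) ρ (γ u) + pd (fun y => g y l ρ) σ (γ u)
        - pd (fun y => g y ρ σ) l (γ u)) with hG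
  have hC := aux_lower g hg (γ u)
  have e1 := aux_sum_three G (g (γ u)) (hg.2.1 _) (fun μ ρ σ => Γc g μ ρ σ (γ u))
    (fun l ρ σ => hC l ρ σ) (vel γ u) (V u) (W u)
  have e2 := aux_sum_three G (g (γ u)) (hg.2.1 _) (fun μ ρ σ => Γc g μ ρ σ (γ u))
    (fun l ρ σ => hC l ρ σ) (vel γ u) (W u) (V u)
  rw [Finset.sum_comm] at e2
  rw [Finset.sum_comm (f := fun μ ν => ∑ ρ, G ν ρ μ * vel γ u ρ * W u μ * V u ν)] at e2
  have hsym : ∀ i j ρ, pd (fun y => g y i j) ρ (γ u) = pd (fun y => g y j i) ρ (γ u) := by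
    intro i j ρ
    congr 1
    ext y
    exact hg.2.1 y i j
  have e3 : ∑ μ, ∑ ν, (∑ ρ, pd (fun y => g y μ ν) ρ (γ u) * vel γ u ρ) * V u μ * W u ν
      = (∑ μ, ∑ ν, ∑ ρ, G ν ρ μ * vel γ u ρ * V u μ * W u ν)
        + ∑ μ, ∑ ν, ∑ ρ, G μ ρ ν * vel γ u ρ * W u ν * V u μ := by
    simp_rw [← Finset.sum_add_distrib, Finset.sum_mul]
    refine Finset.sum_congr rfl fun μ _ => Finset.sum_congr rfl fun ν _ =>
      Finset.sum_congr rfl fun ρ _ => ?_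
    simp only [hG]
    rw [hsym ν μ ρ, hsym ρ μ ν, hsym ρ ν μ]
    ring
  have e4 : ∀ μ ν, g (γ u) ν μ = g (γ u) μ ν := fun μ ν => hg.2.1 _ _ _
  simp_rw [e4] at e2
  rw [← e1, ← e2, ← sub_eq_zero] at e3
  rw [← e3, ← Finset.sum_add_distrib, ← Finset.sum_sub_distrib]
  refine Finset.sum_congr rfl fun μ _ => ?_
  rw [← Finset.sum_add_distrib, ← Finset.sum_sub_distrib]
  refine Finset.sum_congr rfl fun ν _ => ?_
  rw [e4 ν μ]
  ring

lemma aux_sq_const (g : (ι → ℝ) → Matrix ι ι ℝ) (hg : SmoothMetric g)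
    (γ V W : ℝ → ι → ℝ) (hγ : SmoothCurve γ) (hV : SmoothCurve V) (hW : SmoothCurve W)
    (pV : IsParallel g γ V) (pW : IsParallel g γ W) (u : ℝ) :
    sq g (γ u) (V u) (W u) = sq g (γ 0) (V 0) (W 0) := by
  have h := aux_sq_deriv g hg γ V W hγ hV hW pV pW
  exact is_const_of_deriv_eq_zero (f := fun w => sq g (γ w) (V w) (W w))
    (fun u => (h u).differentiableAt) (fun u => (h u).deriv) u 0

lemma aux_vel_smooth (γ : ℝ → ι → ℝ) (hγ : SmoothCurve γ) : SmoothCurve (vel γ) := by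
  intro μ
  have := (contDiff_infty_iff_deriv (𝕜 := ℝ) (f := fun u => γ u μ)).1 (hγ μ)
  exact this.2

/-- Projection to the base as a continuous linear map. -/
def baseL (d₁ d₂ : ℕ) : ((Fin d₁ ⊕ Fin d₂) → ℝ) →L[ℝ] (Fin d₁ → ℝ) :=
  ContinuousLinearMap.pi fun a => ContinuousLinearMap.proj (Sum.inl a)

/-- Projection to the fiber as a continuous linear map. -/
def fibL (d₁ d₂ : ℕ) : ((Fin d₁ ⊕ Fin d₂) → ℝ) →L[ℝ] (Fin d₂ → ℝ) :=
  ContinuousLinearMap.pi fun a => ContinuousLinearMap.proj (Sum.inr a)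

lemma aux_fd_base {d₁ d₂ : ℕ} (h : (Fin d₁ → ℝ) → ℝ) (hh : ContDiff ℝ (⊤ : ℕ∞) h)
    (x : (Fin d₁ ⊕ Fin d₂) → ℝ) :
    HasFDerivAt (fun y : (Fin d₁ ⊕ Fin d₂) → ℝ => h (basePt y))
      ((fderiv ℝ h (basePt x)).comp (baseL d₁ d₂)) x :=
  ((hh.differentiable (by simp) (basePt x)).hasFDerivAt).comp x (baseL d₁ d₂).hasFDerivAt

lemma aux_fd_fib {d₁ d₂ : ℕ} (h : (Fin d₂ → ℝ) → ℝ) (hh : ContDiff ℝ (⊤ : ℕ∞) h)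
    (x : (Fin d₁ ⊕ Fin d₂) → ℝ) :
    HasFDerivAt (fun y : (Fin d₁ ⊕ Fin d₂) → ℝ => h (fibPt y))
      ((fderiv ℝ h (fibPt x)).comp (fibL d₁ d₂)) x :=
  ((hh.differentiable (by simp) (fibPt x)).hasFDerivAt).comp x (fibL d₁ d₂).hasFDerivAt

lemma aux_baseL_inl {d₁ d₂ : ℕ} (a : Fin d₁) :
    baseL d₁ d₂ (Pi.single (Sum.inl a) 1) = Pi.single a 1 := by
  ext b; simp [baseL, Pi.single_apply]

lemma aux_baseL_inr {d₁ d₂ : ℕ} (a : Fin d₂) :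
    baseL d₁ d₂ (Pi.single (Sum.inr a) 1) = 0 := by
  ext b; simp [baseL, Pi.single_apply]

lemma aux_fibL_inl {d₁ d₂ : ℕ} (a : Fin d₁) :
    fibL d₁ d₂ (Pi.single (Sum.inl a) 1) = 0 := by
  ext b; simp [fibL, Pi.single_apply]

lemma aux_pd_base_inl {d₁ d₂ : ℕ} (h : (Fin d₁ → ℝ) → ℝ) (hh : ContDiff ℝ (⊤ : ℕ∞) h)
    (x : (Fin d₁ ⊕ Fin d₂) → ℝ) (a : Fin d₁) :
    pd (fun y : (Fin d₁ ⊕ Fin d₂) → ℝ => h (basePt y)) (Sum.inl a) x = pd h a (basePt x) := by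
  unfold pd
  rw [(aux_fd_base h hh x).fderiv, ContinuousLinearMap.comp_apply, aux_baseL_inl]

lemma aux_pd_base_inr {d₁ d₂ : ℕ} (h : (Fin d₁ → ℝ) → ℝ) (hh : ContDiff ℝ (⊤ : ℕ∞) h)
    (x : (Fin d₁ ⊕ Fin d₂) → ℝ) (a : Fin d₂) :
    pd (fun y : (Fin d₁ ⊕ Fin d₂) → ℝ => h (basePt y)) (Sum.inr a) x = 0 := by
  unfold pd
  rw [(aux_fd_base h hh x).fderiv, ContinuousLinearMap.comp_apply, aux_baseL_inr, map_zero]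

lemma aux_pd_zero (ρ : ι) (x : ι → ℝ) : pd (fun _ : ι → ℝ => (0 : ℝ)) ρ x = 0 := by
  simp [pd]

lemma aux_pd_fib {d₁ d₂ : ℕ} (f : (Fin d₁ → ℝ) → ℝ) (hf : ContDiff ℝ (⊤ : ℕ∞) f)
    (h : (Fin d₂ → ℝ) → ℝ) (hh : ContDiff ℝ (⊤ : ℕ∞) h)
    (x : (Fin d₁ ⊕ Fin d₂) → ℝ) (a : Fin d₁) :
    pd (fun y : (Fin d₁ ⊕ Fin d₂) → ℝ => (f (basePt y)) ^ 2 * h (fibPt y)) (Sum.inl a) x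
      = 2 * f (basePt x) * pd f a (basePt x) * h (fibPt x) := by
  unfold pd
  rw [(((aux_fd_base f hf x).pow 2).fun_mul (aux_fd_fib h hh x)).fderiv]
  simp [aux_baseL_inl, aux_fibL_inl]
  ring

section warp

variable {d₁ d₂ : ℕ}
    (gB : (Fin d₁ → ℝ) → Matrix (Fin d₁) (Fin d₁) ℝ)
    (gF : (Fin d₂ → ℝ) → Matrix (Fin d₂) (Fin d₂) ℝ)
    (f : (Fin d₁ → ℝ) → ℝ)

lemma aux_warped_eq (x : (Fin d₁ ⊕ Fin d₂) → ℝ) :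
    warped gB gF f x = Matrix.fromBlocks (gB (basePt x)) 0 0
      ((f (basePt x)) ^ 2 • gF (fibPt x)) := by
  ext i j
  rcases i with i | i <;> rcases j with j | j <;> simp [warped]

lemma aux_warped_smooth (hB : SmoothMetric gB) (hF : SmoothMetric gF)
    (hf : ContDiff ℝ (⊤ : ℕ∞) f) (hfpos : ∀ y, 0 < f y) :
    SmoothMetric (warped gB gF f) := by
  have cb : ContDiff ℝ (⊤ : ℕ∞) (basePt : ((Fin d₁ ⊕ Fin d₂) → ℝ) → _) :=
    (baseL d₁ d₂).contDiff
  have cf : ContDiff ℝ (⊤ : ℕ∞) (fibPt : ((Fin d₁ ⊕ Fin d₂) → ℝ) → _) :=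
    (fibL d₁ d₂).contDiff
  refine ⟨?_, ?_, ?_⟩
  · rintro (i | i) (j | j)
    · exact (hB.1 i j).comp cb
    · exact contDiff_const
    · exact contDiff_const
    · exact ((hf.comp cb).pow 2).mul ((hF.1 i j).comp cf)
  · rintro x (i | i) (j | j)
    · exact hB.2.1 _ i j
    · rfl
    · rfl
    · simp [warped, hF.2.1 _ i j]
  · intro x
    rw [aux_warped_eq, Matrix.det_fromBlocks_zero₂₁, Matrix.det_smul]
    have h1 : IsUnit ((f (basePt x) ^ 2) ^ Fintype.card (Fin d₂)) :=
      (pow_ne_zero _ (pow_ne_zero _ (hfpos _).ne')).isUnit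
    exact (hB.2.2 _).mul (h1.mul (hF.2.2 _))

lemma aux_ginv_warped (hB : SmoothMetric gB) (hF : SmoothMetric gF)
    (hfpos : ∀ y, 0 < f y) (x : (Fin d₁ ⊕ Fin d₂) → ℝ) :
    ginv (warped gB gF f) x = Matrix.fromBlocks (ginv gB (basePt x)) 0 0
      (((f (basePt x)) ^ 2)⁻¹ • ginv gF (fibPt x)) := by
  unfold ginv
  apply Matrix.inv_eq_right_inv
  have h0 : f (basePt x) ^ 2 ≠ 0 := pow_ne_zero _ (hfpos _).ne'
  rw [aux_warped_eq, Matrix.fromBlocks_multiply]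
  simp [Matrix.mul_nonsing_inv _ (hB.2.2 _), Matrix.mul_nonsing_inv _ (hF.2.2 _), smul_smul, h0]

lemma aux_Γ (hB : SmoothMetric gB) (hF : SmoothMetric gF)
    (hfpos : ∀ y, 0 < f y) (x : (Fin d₁ ⊕ Fin d₂) → ℝ) (b : Fin d₁) (ρ σ : Fin d₁ ⊕ Fin d₂) :
    Γc (warped gB gF f) (Sum.inl b) ρ σ x = (1 / 2) * ∑ c, ginv gB (basePt x) b c *
      (pd (fun y => warped gB gF f y (Sum.inl c) σ) ρ x
        + pd (fun y => warped gB gF f y (Sum.inl c) ρ) σ x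
        - pd (fun y => warped gB gF f y ρ σ) (Sum.inl c) x) := by
  unfold Γc
  rw [aux_ginv_warped gB gF f hB hF hfpos, Fintype.sum_sum_type]
  simp

lemma aux_Γ_bb (hB : SmoothMetric gB) (hF : SmoothMetric gF) 
    (hfpos : ∀ y, 0 < f y) (x : (Fin d₁ ⊕ Fin d₂) → ℝ) (b a c : Fin d₁) :
    Γc (warped gB gF f) (Sum.inl b) (Sum.inl a) (Sum.inl c) x = Γc gB b a c (basePt x) := by
  rw [aux_Γ gB gF f hB hF hfpos]
  have h (i j k : Fin d₁) : pd (fun y => warped gB gF f y (Sum.inl i) (Sum.inl j)) (Sum.inl k) x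
      = pd (fun y => gB y i j) k (basePt x) :=
    aux_pd_base_inl (fun y => gB y i j) (hB.1 i j) x k
  simp_rw [h]
  rfl

lemma aux_Γ_bf (hB : SmoothMetric gB) (hF : SmoothMetric gF)
    (hfpos : ∀ y, 0 < f y) (x : (Fin d₁ ⊕ Fin d₂) → ℝ) (b a : Fin d₁) (j : Fin d₂) :
    Γc (warped gB gF f) (Sum.inl b) (Sum.inl a) (Sum.inr j) x = 0 := by
  rw [aux_Γ gB gF f hB hF hfpos]
  have h (i j : Fin d₁) (k : Fin d₂) :
      pd (fun y => warped gB gF f y (Sum.inl i) (Sum.inl j)) (Sum.inr k) x = 0 :=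
    aux_pd_base_inr (fun y => gB y i j) (hB.1 i j) x k
  have h' (i : Fin d₁) (k : Fin d₂) (l : Fin d₁ ⊕ Fin d₂) :
      pd (fun y => warped gB gF f y (Sum.inl i) (Sum.inr k)) l x = 0 := aux_pd_zero l x
  simp [h, h']

lemma aux_Γ_fb (hB : SmoothMetric gB) (hF : SmoothMetric gF)
    (hfpos : ∀ y, 0 < f y) (x : (Fin d₁ ⊕ Fin d₂) → ℝ) (b a : Fin d₁) (j : Fin d₂) :
    Γc (warped gB gF f) (Sum.inl b) (Sum.inr j) (Sum.inl a) x = 0 := by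
  rw [aux_Γ gB gF f hB hF hfpos]
  have h (i j : Fin d₁) (k : Fin d₂) :
      pd (fun y => warped gB gF f y (Sum.inl i) (Sum.inl j)) (Sum.inr k) x = 0 :=
    aux_pd_base_inr (fun y => gB y i j) (hB.1 i j) x k
  have h' (i : Fin d₁) (k : Fin d₂) (l : Fin d₁ ⊕ Fin d₂) :
      pd (fun y => warped gB gF f y (Sum.inl i) (Sum.inr k)) l x = 0 := aux_pd_zero l x
  have h'' (i : Fin d₁) (k : Fin d₂) (l : Fin d₁ ⊕ Fin d₂) :
      pd (fun y => warped gB gF f y (Sum.inr k) (Sum.inl i)) l x = 0 := aux_pd_zero l x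
  simp [h, h', h'']

lemma aux_Γ_ff (hB : SmoothMetric gB) (hF : SmoothMetric gF) (hf : ContDiff ℝ (⊤ : ℕ∞) f)
    (hfpos : ∀ y, 0 < f y) (x : (Fin d₁ ⊕ Fin d₂) → ℝ) (b : Fin d₁) (i j : Fin d₂) :
    Γc (warped gB gF f) (Sum.inl b) (Sum.inr i) (Sum.inr j) x
      = - f (basePt x) * gF (fibPt x) i j
        * ∑ c, ginv gB (basePt x) b c * pd f c (basePt x) := by
  rw [aux_Γ gB gF f hB hF hfpos]
  have h' (i : Fin d₁) (k : Fin d₂) (l : Fin d₁ ⊕ Fin d₂) :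
      pd (fun y => warped gB gF f y (Sum.inl i) (Sum.inr k)) l x = 0 := aux_pd_zero l x
  have h (c : Fin d₁) : pd (fun y => warped gB gF f y (Sum.inr i) (Sum.inr j)) (Sum.inl c) x
      = 2 * f (basePt x) * pd f c (basePt x) * gF (fibPt x) i j :=
    aux_pd_fib f hf (fun y => gF y i j) (hF.1 i j) x c
  simp_rw [h', h, Finset.mul_sum]
  refine Finset.sum_congr rfl fun c _ => ?_
  ring

lemma aux_sq_warped (x v w : (Fin d₁ ⊕ Fin d₂) → ℝ) :
    sq (warped gB gF f) x v w
      = sq gB (basePt x) (fun a => v (Sum.inl a)) (fun a => w (Sum.inl a))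
        + f (basePt x) ^ 2 * sq gF (fibPt x) (fun a => v (Sum.inr a)) (fun a => w (Sum.inr a)) := by
  unfold sq
  simp only [Fintype.sum_sum_type, warped, Matrix.of_apply, zero_mul, Finset.sum_const_zero,
    add_zero, zero_add, Finset.mul_sum]
  congr 1
  refine Finset.sum_congr rfl fun c _ => Finset.sum_congr rfl fun d _ => ?_
  ring

lemma aux_base (hB : SmoothMetric gB) (hF : SmoothMetric gF) (hf : ContDiff ℝ (⊤ : ℕ∞) f)
    (hfpos : ∀ y, 0 < f y) (γ E : ℝ → (Fin d₁ ⊕ Fin d₂) → ℝ)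
    (hE : IsParallel (warped gB gF f) γ E) (u : ℝ) (b : Fin d₁) :
    deriv (fun w => E w (Sum.inl b)) u
          + ∑ a, ∑ c, Γc gB b a c (basePt (γ u)) * vel (baseCurve γ) u a * E u (Sum.inl c)
      = (sq (warped gB gF f) (γ u) (vel γ u) (E u)
              - sq gB (basePt (γ u)) (vel (baseCurve γ) u) (fun c => E u (Sum.inl c)))
            * (f (basePt (γ u)))⁻¹
            * (∑ c, ginv gB (basePt (γ u)) b c * pd f c (basePt (γ u))) := by
  have h := hE u (Sum.inl b)
  unfold covD at h
  simp only [Fintype.sum_sum_type, aux_Γ_bb gB gF f hB hF hfpos, aux_Γ_bf gB gF f hB hF hfpos,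
    aux_Γ_fb gB gF f hB hF hfpos, aux_Γ_ff gB gF f hB hF hf hfpos, zero_mul,
    Finset.sum_const_zero, add_zero, zero_add] at h
  rw [aux_sq_warped]
  have hv : vel (baseCurve γ) u = fun a => vel γ u (Sum.inl a) := rfl
  rw [hv]
  have h0 : f (basePt (γ u)) ≠ 0 := (hfpos _).ne'
  set S := ∑ c, ginv gB (basePt (γ u)) b c * pd f c (basePt (γ u))
  have e : ∑ i, ∑ j, -f (basePt (γ u)) * gF (fibPt (γ u)) i j * S * vel γ u (Sum.inr i)
        * E u (Sum.inr j)
      = - f (basePt (γ u)) * S * sq gF (fibPt (γ u)) (fun a => vel γ u (Sum.inr a))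
          (fun a => E u (Sum.inr a)) := by
    unfold sq
    simp_rw [Finset.mul_sum]
    refine Finset.sum_congr rfl fun c _ => Finset.sum_congr rfl fun d _ => ?_
    ring
  rw [e] at h
  rw [add_sub_cancel_left]
  have e5 : f (basePt (γ u)) ^ 2 * sq gF (fibPt (γ u)) (fun a => vel γ u (Sum.inr a))
          (fun a => E u (Sum.inr a)) * (f (basePt (γ u)))⁻¹ * S
      = f (basePt (γ u)) * S * sq gF (fibPt (γ u)) (fun a => vel γ u (Sum.inr a))
          (fun a => E u (Sum.inr a)) := by
    field_simp
  rw [e5]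
  linarith

end warp

lemma aux_pd_cont (h : (ι → ℝ) → ℝ) (hh : ContDiff ℝ (⊤ : ℕ∞) h) (ρ : ι) :
    Continuous (pd h ρ) := by
  unfold pd
  exact (hh.continuous_fderiv (by simp)).clm_apply continuous_const

lemma aux_ginv_cont (g : (ι → ℝ) → Matrix ι ι ℝ) (hg : SmoothMetric g) (μ ν : ι) :
    Continuous fun x => ginv g x μ ν := by
  have hc : Continuous g := continuous_matrix fun i j => (hg.1 i j).continuous
  unfold ginv
  simp_rw [Matrix.inv_def, Matrix.smul_apply, Ring.inverse_eq_inv', smul_eq_mul]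
  exact (hc.matrix_det.inv₀ fun x => (hg.2.2 x).ne_zero).mul (hc.matrix_adjugate.matrix_elem μ ν)

lemma aux_Γ_cont (g : (ι → ℝ) → Matrix ι ι ℝ) (hg : SmoothMetric g) (μ ρ σ : ι) :
    Continuous (Γc g μ ρ σ) := by
  unfold Γc
  refine continuous_const.mul (continuous_finsetSum _ fun ν _ => (aux_ginv_cont g hg μ ν).mul ?_)
  exact ((aux_pd_cont _ (hg.1 _ _) _).add (aux_pd_cont _ (hg.1 _ _) _)).sub
    (aux_pd_cont _ (hg.1 _ _) _)

lemma aux_linear_ode (M : ℝ → Matrix ι ι ℝ) (hM : ∀ i j, Continuous fun t => M t i j)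
    (y : ℝ → ι → ℝ) (hy : ∀ t i, HasDerivAt (fun w => y w i) (∑ j, M t i j * y t j) t)
    (h0 : y 0 = 0) (t : ℝ) : y t = 0 := by
  letI : NormedAddCommGroup (Matrix ι ι ℝ) := Matrix.linftyOpNormedAddCommGroup
  have hc : Continuous M := continuous_matrix hM
  have hyd : ∀ t, HasDerivAt y ((M t).mulVec (y t)) t := fun t => hasDerivAt_pi.2 (hy t)
  obtain ⟨K, hK⟩ := (isCompact_Icc (a := -(|t| + 1)) (b := |t| + 1)).exists_bound_of_continuousOn
    hc.continuousOn
  have hl : ∀ s ∈ Set.Ioo (-(|t| + 1)) (|t| + 1), LipschitzOnWith K.toNNReal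
      (fun x => (M s).mulVec x) Set.univ := by
    intro s hs
    refine LipschitzOnWith.of_dist_le_mul fun x _ z _ => ?_
    rw [dist_eq_norm, dist_eq_norm, ← Matrix.mulVec_sub]
    refine (Matrix.linfty_opNorm_mulVec _ _).trans ?_
    gcongr
    exact (hK s (Set.Ioo_subset_Icc_self hs)).trans (Real.le_coe_toNNReal K)
  have ht0 : (0 : ℝ) ∈ Set.Ioo (-(|t| + 1)) (|t| + 1) := by
    constructor <;> linarith [abs_nonneg t]
  have htt : t ∈ Set.Ioo (-(|t| + 1)) (|t| + 1) := by
    constructor <;> linarith [le_abs_self t, neg_abs_le t]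
  have := ODE_solution_unique_of_mem_Ioo (v := fun s x => (M s).mulVec x)
    (s := fun _ => Set.univ) (f := y) (g := fun _ => 0) hl ht0
    (fun s _ => ⟨hyd s, trivial⟩)
    (fun s _ => ⟨by simpa using hasDerivAt_const s (0 : ι → ℝ), trivial⟩) h0
  exact this htt

/-- Along an affinely parametrized geodesic of a warped product,
for a parallelly transported field `E`: the product `g(N,E)` is constant equal to
`a := g(N(0), E(0))`; the base component satisfies the transport equation
`N̂^a∇̂_aE^b = (a − ĝ(N̂,Ê)) f⁻¹ (grad f)^b`; if `a = 0` this reduces to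
`N̂^b∇̂_bÊ^a = −(ĝ_{bc}N̂^bÊ^c) ∇̂^a(ln f)`; and if moreover `Ê(0) = 0` then
`Ê(u) = 0` for all `u`. -/
theorem parallel_transport_along_geodesic {d₁ d₂ : ℕ}
    (gB : (Fin d₁ → ℝ) → Matrix (Fin d₁) (Fin d₁) ℝ)
    (gF : (Fin d₂ → ℝ) → Matrix (Fin d₂) (Fin d₂) ℝ)
    (f : (Fin d₁ → ℝ) → ℝ)
    (hB : SmoothMetric gB) (hF : SmoothMetric gF)
    (hf : ContDiff ℝ (⊤ : ℕ∞) f) (hfpos : ∀ y, 0 < f y)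
    (γ : ℝ → (Fin d₁ ⊕ Fin d₂) → ℝ) (hγs : SmoothCurve γ)
    (hgeo : IsGeodesic (warped gB gF f) γ)
    (E : ℝ → (Fin d₁ ⊕ Fin d₂) → ℝ) (hEs : SmoothCurve E)
    (hE : IsParallel (warped gB gF f) γ E) :
    (∀ u : ℝ, sq (warped gB gF f) (γ u) (vel γ u) (E u)
        = sq (warped gB gF f) (γ 0) (vel γ 0) (E 0)) ∧
    (∀ (u : ℝ) (b : Fin d₁),
      deriv (fun w => E w (Sum.inl b)) u
          + ∑ a, ∑ c, Γc gB b a c (basePt (γ u)) * vel (baseCurve γ) u a * E u (Sum.inl c)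
        = (sq (warped gB gF f) (γ 0) (vel γ 0) (E 0)
              - sq gB (basePt (γ u)) (vel (baseCurve γ) u) (fun c => E u (Sum.inl c)))
            * (f (basePt (γ u)))⁻¹
            * (∑ c, ginv gB (basePt (γ u)) b c * pd f c (basePt (γ u)))) ∧
    (sq (warped gB gF f) (γ 0) (vel γ 0) (E 0) = 0 →
      ∀ (u : ℝ) (b : Fin d₁),
        deriv (fun w => E w (Sum.inl b)) u
            + ∑ a, ∑ c, Γc gB b a c (basePt (γ u)) * vel (baseCurve γ) u a * E u (Sum.inl c)
          = -(sq gB (basePt (γ u)) (vel (baseCurve γ) u) (fun c => E u (Sum.inl c)))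
              * (∑ c, ginv gB (basePt (γ u)) b c
                  * pd (fun y => Real.log (f y)) c (basePt (γ u)))) ∧
    (sq (warped gB gF f) (γ 0) (vel γ 0) (E 0) = 0 →
      (∀ b, E 0 (Sum.inl b) = 0) → ∀ (u : ℝ) (b : Fin d₁), E u (Sum.inl b) = 0) := by
  have hW := aux_warped_smooth gB gF f hB hF hf hfpos
  have h1 : ∀ u : ℝ, sq (warped gB gF f) (γ u) (vel γ u) (E u)
        = sq (warped gB gF f) (γ 0) (vel γ 0) (E 0) :=
    aux_sq_const _ hW γ (vel γ) E hγs (aux_vel_smooth γ hγs) hEs (fun u μ => hgeo u μ) hE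
  have h2 := aux_base gB gF f hB hF hf hfpos γ E hE
  simp_rw [h1] at h2
  have hlog : ∀ (c : Fin d₁) x, pd (fun y => Real.log (f y)) c x = (f x)⁻¹ * pd f c x := by
    intro c x
    unfold pd
    rw [((hf.differentiable (by simp) x).hasFDerivAt.log (hfpos x).ne').fderiv]
    simp
  have h3 : sq (warped gB gF f) (γ 0) (vel γ 0) (E 0) = 0 →
      ∀ (u : ℝ) (b : Fin d₁),
        deriv (fun w => E w (Sum.inl b)) u
            + ∑ a, ∑ c, Γc gB b a c (basePt (γ u)) * vel (baseCurve γ) u a * E u (Sum.inl c)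
          = -(sq gB (basePt (γ u)) (vel (baseCurve γ) u) (fun c => E u (Sum.inl c)))
              * (∑ c, ginv gB (basePt (γ u)) b c
                  * pd (fun y => Real.log (f y)) c (basePt (γ u))) := by
    intro ha u b
    rw [h2, ha, zero_sub, mul_assoc]
    congr 1
    rw [Finset.mul_sum]
    refine Finset.sum_congr rfl fun c _ => ?_
    rw [hlog]; ring
  refine ⟨h1, h2, h3, ?_⟩
  intro ha hE0
  have hbs : SmoothCurve (baseCurve γ) := fun a => hγs (Sum.inl a)
  have hbc : Continuous fun u => basePt (γ u) := continuous_pi fun a => (hbs a).continuous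
  have hvc : ∀ a, Continuous fun u => vel (baseCurve γ) u a :=
    fun a => (aux_vel_smooth _ hbs a).continuous
  have hlogs : ContDiff ℝ (⊤ : ℕ∞) fun y => Real.log (f y) := hf.log fun y => (hfpos y).ne'
  let M : ℝ → Matrix (Fin d₁) (Fin d₁) ℝ := fun u => Matrix.of fun b c =>
    -(∑ a, Γc gB b a c (basePt (γ u)) * vel (baseCurve γ) u a)
      - (∑ a, gB (basePt (γ u)) a c * vel (baseCurve γ) u a)
        * (∑ d, ginv gB (basePt (γ u)) b d * pd (fun y => Real.log (f y)) d (basePt (γ u)))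
  have hMc : ∀ b c, Continuous fun t => M t b c := by
    intro b c
    refine Continuous.sub (Continuous.neg ?_) (Continuous.mul ?_ ?_)
    · exact continuous_finsetSum _ fun a _ => ((aux_Γ_cont gB hB b a c).comp hbc).mul (hvc a)
    · exact continuous_finsetSum _ fun a _ => ((hB.1 a c).continuous.comp hbc).mul (hvc a)
    · exact continuous_finsetSum _ fun d _ => ((aux_ginv_cont gB hB b d).comp hbc).mul
        ((aux_pd_cont _ hlogs d).comp hbc)
  have hy := aux_linear_ode M hMc (fun u b => E u (Sum.inl b)) (by
    intro u b
    have hd := ((hEs (Sum.inl b)).differentiable (by simp) u).hasDerivAt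
    refine hd.congr_deriv ?_
    rw [eq_sub_of_add_eq (h3 ha u b)]
    simp only [M, Matrix.of_apply, sub_mul, Finset.sum_sub_distrib, neg_mul,
      Finset.sum_neg_distrib]
    rw [sub_eq_add_neg, add_comm, sub_eq_add_neg]
    unfold sq
    congr 2
    · rw [Finset.sum_comm]
      simp_rw [Finset.sum_mul]
    · rw [Finset.sum_comm, Finset.sum_mul]
      refine Finset.sum_congr rfl fun c _ => ?_
      rw [← Finset.sum_mul]
      ring) (funext hE0)
  intro u b
  exact congrFun (hy u) b

end Paper
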